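/- arXiv:2407.02177 — 2 statements merged into one kernel-verified Lean document; each statement's English description precedes it below -/
import Mathlib

section
/- Consider an MS-DWSF instance on a path with the facility at node a = n (so all groups are at nodes i < n and move rightward). Let OPT_D be its optimal objective value, let W_D = d({n−1,n})·∑_G w(G), and let OPT_B be the optimal value of the MS-BPWRT instance whose groups are all the groups G_{i,j} (i < n) with their given sizes and weights, with capacity C and ready times τ(G_{i,j}) = d(i, n−1) (the sum of the distances of the edges between nodes i and n−1). Then OPT_B ≤ OPT_D − W_D. In particular, from any feasible MS-DWSF solution, setting B_{T'} = D_{n−1}^{(T')} for every time T' yields a feasible MS-BPWRT packing whose objective value equals the MS-DWSF objective value minus W_D. -/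
/-- `distTo d i k` is the total distance of the edges of the path between nodes `i`
and `k` (for `i ≤ k`), where `d v` is the distance of edge `{v, v+1}`. -/
def distTo (d : ℕ → ℕ) (i k : ℕ) : ℕ := ∑ v ∈ Finset.Ico i k, d v

/-- The MS-DWSF dynamics (facility at node `a`): `stateAt n a orig d D i t` is the
collection `𝒮_i^{(t)}` of groups present at node `i` at time `t` under schedule `D`. -/
def stateAt {m : ℕ} (n a : ℕ) (orig : Fin m → ℕ) (d : ℕ → ℕ)
    (D : ℕ → ℕ → Finset (Fin m)) (i : ℕ) : ℕ → Finset (Fin m)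
  | 0 => Finset.univ.filter fun g => orig g = i
  | t + 1 =>
      ((stateAt n a orig d D i t) \ D i (t + 1)) ∪
        (if 1 < i ∧ i ≤ a ∧ d (i - 1) ≤ t + 1 then D (i - 1) (t + 1 - d (i - 1)) else ∅) ∪
        (if a ≤ i ∧ i < n ∧ d i ≤ t + 1 then D (i + 1) (t + 1 - d i) else ∅)

/-- A feasible MS-DWSF schedule. -/
def FeasSched {m : ℕ} (n a C : ℕ) (orig S : Fin m → ℕ) (d : ℕ → ℕ)
    (D : ℕ → ℕ → Finset (Fin m)) : Prop :=
  (∀ t, D a t = ∅) ∧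
  (∀ i, D i 0 = ∅) ∧
  (∀ i t, (i = 0 ∨ n < i) → D i t = ∅) ∧
  (∀ i t, D i (t + 1) ⊆ stateAt n a orig d D i t) ∧
  (∀ i t, ∑ g ∈ D i t, S g ≤ C)

/-- The arrival time `α(G)` of group `g` at the facility `a` under schedule `D`. -/
noncomputable def arrival {m : ℕ} (n a : ℕ) (orig : Fin m → ℕ) (d : ℕ → ℕ)
    (D : ℕ → ℕ → Finset (Fin m)) (g : Fin m) : ℕ :=
  sInf {t | g ∈ stateAt n a orig d D a t}

/-- The bin (dispatch time across the last edge `{n-1, n}`) of group `g` in the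
MS-BPWRT packing obtained from a MS-DWSF schedule `D` by `B_{T'} = D_{n-1}^{(T')}`. -/
noncomputable def binOf {m : ℕ} (n : ℕ) (D : ℕ → ℕ → Finset (Fin m)) (g : Fin m) : ℕ :=
  sInf {T' | g ∈ D (n - 1) T'}

/-!
A group reaches the facility `n` exactly `d (n - 1)` time steps after its dispatch across the last
edge, so its arrival time is its bin index shifted by `d (n - 1)`; summing against the weights
shifts the objective by `W_D`.  It cannot be dispatched from node `n - 1` before it has travelled
there from its origin, which is the ready-time constraint, and the edge capacity is the bin
capacity.
-/

theorem distTo_succ (d : ℕ → ℕ) {i k : ℕ} (h : i ≤ k) :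
    distTo d i (k + 1) = distTo d i k + d k :=
  Finset.sum_Ico_succ_top h d

theorem exists_add_le_succ_iff {P : ℕ → Prop} (h₀ : ¬P 0) (e t : ℕ) :
    (∃ s, s + e ≤ t + 1 ∧ P s) ↔ (∃ s, s + e ≤ t ∧ P s) ∨ P (t + 1 - e) := by
  constructor
  · rintro ⟨s, hs, hP⟩
    rcases hs.lt_or_eq with hlt | heq
    · exact Or.inl ⟨s, Nat.lt_succ_iff.mp hlt, hP⟩
    · exact Or.inr (by rwa [← heq, Nat.add_sub_cancel])
  · rintro (⟨s, hs, hP⟩ | hP)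
    · exact ⟨s, hs.trans t.le_succ, hP⟩
    · have hpos : t + 1 - e ≠ 0 := fun h => h₀ (h ▸ hP)
      exact ⟨_, by omega, hP⟩

/-- A feasible MS-BPWRT packing with capacity `C`, sizes `S` and ready times `τ`, given by the
function `t` sending each group to its (positive) bin index. -/
structure IsPacking {ι : Type*} [Fintype ι] (C : ℕ) (S τ t : ι → ℕ) : Prop where
  one_le : ∀ g, 1 ≤ t g
  ready_le : ∀ g, τ g ≤ t g
  load_le : ∀ j, ∑ g ∈ Finset.univ.filter (fun g => t g = j), S g ≤ C

theorem mem_dispatch_binOf {m n : ℕ} {D : ℕ → ℕ → Finset (Fin m)} {g : Fin m}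
    (hg : ∃ s, g ∈ D (n - 1) s) : g ∈ D (n - 1) (binOf n D g) :=
  Nat.sInf_mem hg

namespace FeasSched

section AnyFacility

variable {m n a C : ℕ} {orig S : Fin m → ℕ} {d : ℕ → ℕ} {D : ℕ → ℕ → Finset (Fin m)}
  {g : Fin m} {i t : ℕ}

theorem dispatch_facility_eq_empty (h : FeasSched n a C orig S d D) (t : ℕ) : D a t = ∅ :=
  h.1 t

theorem time_pos_of_mem (h : FeasSched n a C orig S d D) (hg : g ∈ D i t) : 0 < t := by
  refine Nat.pos_of_ne_zero ?_
  rintro rfl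
  simp [h.2.1 i] at hg

theorem node_mem_Icc_of_mem (h : FeasSched n a C orig S d D) (hg : g ∈ D i t) :
    i ∈ Finset.Icc 1 n := by
  by_contra hi
  have hout : i = 0 ∨ n < i := by rw [Finset.mem_Icc] at hi; omega
  simp [h.2.2.1 i t hout] at hg

theorem mem_stateAt_of_mem_succ (h : FeasSched n a C orig S d D) (hg : g ∈ D i (t + 1)) :
    g ∈ stateAt n a orig d D i t :=
  h.2.2.2.1 i t hg

theorem sum_dispatch_le (h : FeasSched n a C orig S d D) (i t : ℕ) : ∑ g ∈ D i t, S g ≤ C :=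
  h.2.2.2.2 i t

theorem mem_stateAt_succ_iff (h : FeasSched n a C orig S d D) :
    g ∈ stateAt n a orig d D i (t + 1) ↔
      (g ∈ stateAt n a orig d D i t ∧ g ∉ D i (t + 1)) ∨
      (i ≤ a ∧ g ∈ D (i - 1) (t + 1 - d (i - 1))) ∨
      (a ≤ i ∧ g ∈ D (i + 1) (t + 1 - d i)) := by
  -- The range conditions in `stateAt` are redundant: nothing is dispatched outside `1, …, n`, and
  -- `t + 1 - d _` truncates to time `0`, when nothing is dispatched either.
  have left_range (hg : g ∈ D (i - 1) (t + 1 - d (i - 1))) : 1 < i ∧ d (i - 1) ≤ t + 1 := by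
    have hnode := Finset.mem_Icc.mp (h.node_mem_Icc_of_mem hg)
    have htime := h.time_pos_of_mem hg
    omega
  have right_range (hg : g ∈ D (i + 1) (t + 1 - d i)) : i < n ∧ d i ≤ t + 1 := by
    have hnode := Finset.mem_Icc.mp (h.node_mem_Icc_of_mem hg)
    have htime := h.time_pos_of_mem hg
    omega
  simp only [stateAt, Finset.mem_union, Finset.mem_sdiff, apply_ite (g ∈ ·), Finset.notMem_empty,
    if_false_right]
  tauto

theorem le_and_distTo_le_of_mem_stateAt (h : FeasSched n a C orig S d D) (hi : i < a)
    (hg : g ∈ stateAt n a orig d D i t) : orig g ≤ i ∧ distTo d (orig g) i ≤ t := by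
  induction t using Nat.strong_induction_on generalizing i with
  | _ t ih =>
    cases t with
    | zero =>
      obtain rfl : orig g = i := by simpa [stateAt] using hg
      simp [distTo]
    | succ t =>
      rcases h.mem_stateAt_succ_iff.mp hg with ⟨hstay, -⟩ | ⟨-, hleft⟩ | ⟨hai, -⟩
      · exact (ih t t.lt_succ_self hi hstay).imp_right (·.trans t.le_succ)
      · obtain ⟨k, rfl⟩ : ∃ k, i = k + 1 :=
          ⟨i - 1, by have := Finset.mem_Icc.mp (h.node_mem_Icc_of_mem hleft); omega⟩
        rw [Nat.add_sub_cancel] at hleft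
        obtain ⟨s, hs⟩ := Nat.exists_eq_add_one.mpr (h.time_pos_of_mem hleft)
        rw [hs] at hleft
        obtain ⟨hle, hdist⟩ :=
          ih s (by omega) (k.lt_succ_self.trans hi) (h.mem_stateAt_of_mem_succ hleft)
        exact ⟨hle.trans k.le_succ, by rw [distTo_succ d hle]; omega⟩
      · exact absurd hi hai.not_gt

theorem distTo_lt_of_mem_dispatch (h : FeasSched n a C orig S d D) (hi : i < a)
    (hg : g ∈ D i t) : distTo d (orig g) i < t := by
  obtain ⟨s, rfl⟩ := Nat.exists_eq_add_one.mpr (h.time_pos_of_mem hg)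
  exact Nat.lt_succ_of_le
    (h.le_and_distTo_le_of_mem_stateAt hi (h.mem_stateAt_of_mem_succ hg)).2

theorem mem_stateAt_facility_iff (h : FeasSched n a C orig S d D) :
    g ∈ stateAt n a orig d D a t ↔
      orig g = a ∨ (∃ s, s + d (a - 1) ≤ t ∧ g ∈ D (a - 1) s) ∨
        (∃ s, s + d a ≤ t ∧ g ∈ D (a + 1) s) := by
  have notMem_zero (i : ℕ) : g ∉ D i 0 := fun hg => (h.time_pos_of_mem hg).false
  induction t with
  | zero => simp +contextual [stateAt, notMem_zero]
  | succ t ih =>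
    have split_last (i e : ℕ) : (∃ s, s + e ≤ t + 1 ∧ g ∈ D i s) ↔
        (∃ s, s + e ≤ t ∧ g ∈ D i s) ∨ g ∈ D i (t + 1 - e) :=
      exists_add_le_succ_iff (P := fun s => g ∈ D i s) (notMem_zero i) e t
    simp only [h.mem_stateAt_succ_iff, ih, h.dispatch_facility_eq_empty, Finset.notMem_empty,
      not_false_eq_true, and_true, le_refl, true_and, split_last]
    rw [or_assoc, or_or_or_comm]

end AnyFacility

section LastFacility

variable {m n C : ℕ} {orig S : Fin m → ℕ} {d : ℕ → ℕ} {D : ℕ → ℕ → Finset (Fin m)}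
  {g : Fin m} {t : ℕ}

theorem mem_stateAt_last_iff (h : FeasSched n n C orig S d D) (hg : orig g ≠ n) :
    g ∈ stateAt n n orig d D n t ↔ ∃ s, s + d (n - 1) ≤ t ∧ g ∈ D (n - 1) s := by
  have notMem_right (s : ℕ) : g ∉ D (n + 1) s := fun hs =>
    (Finset.mem_Icc.mp (h.node_mem_Icc_of_mem hs)).2.not_gt n.lt_succ_self
  simp only [h.mem_stateAt_facility_iff, hg, notMem_right, and_false, exists_false, or_false,
    false_or]

theorem exists_mem_dispatch_last (h : FeasSched n n C orig S d D) (hg : orig g ≠ n)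
    (harr : ∃ t, g ∈ stateAt n n orig d D n t) : ∃ s, g ∈ D (n - 1) s := by
  obtain ⟨t, ht⟩ := harr
  obtain ⟨s, -, hs⟩ := (h.mem_stateAt_last_iff hg).mp ht
  exact ⟨s, hs⟩

theorem arrival_eq_binOf_add (h : FeasSched n n C orig S d D) (hg : orig g ≠ n)
    (harr : ∃ t, g ∈ stateAt n n orig d D n t) :
    arrival n n orig d D g = binOf n D g + d (n - 1) := by
  apply le_antisymm
  · have hbin := mem_dispatch_binOf (h.exists_mem_dispatch_last hg harr)
    exact Nat.sInf_le ((h.mem_stateAt_last_iff hg).mpr ⟨_, le_rfl, hbin⟩)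
  · have harrival : g ∈ stateAt n n orig d D n (arrival n n orig d D g) := Nat.sInf_mem harr
    obtain ⟨s, hs, hmem⟩ := (h.mem_stateAt_last_iff hg).mp harrival
    calc
      binOf n D g + d (n - 1) ≤ s + d (n - 1) := Nat.add_le_add_right (Nat.sInf_le hmem) _
      _ ≤ arrival n n orig d D g := hs

theorem isPacking_binOf (h : FeasSched n n C orig S d D) (horig : ∀ g, orig g < n)
    (harr : ∀ g, ∃ t, g ∈ stateAt n n orig d D n t) :
    IsPacking C S (fun g => distTo d (orig g) (n - 1)) (binOf n D) := by
  have hmem (g : Fin m) : g ∈ D (n - 1) (binOf n D g) :=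
    mem_dispatch_binOf (h.exists_mem_dispatch_last (horig g).ne (harr g))
  have hready (g : Fin m) : distTo d (orig g) (n - 1) < binOf n D g :=
    h.distTo_lt_of_mem_dispatch (Nat.sub_one_lt_of_lt (horig g)) (hmem g)
  refine ⟨fun g => Nat.one_le_of_lt (hready g), fun g => (hready g).le, fun j => ?_⟩
  refine (Finset.sum_le_sum_of_subset fun g hg => ?_).trans (h.sum_dispatch_le (n - 1) j)
  exact (Finset.mem_filter.mp hg).2 ▸ hmem g

theorem sum_mul_binOf_add (h : FeasSched n n C orig S d D) (horig : ∀ g, orig g ≠ n)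
    (harr : ∀ g, ∃ t, g ∈ stateAt n n orig d D n t) (w : Fin m → ℕ) :
    ∑ g, w g * binOf n D g + d (n - 1) * ∑ g, w g = ∑ g, w g * arrival n n orig d D g := by
  simp only [h.arrival_eq_binOf_add (horig _) (harr _), mul_add, Finset.sum_add_distrib,
    ← Finset.sum_mul, mul_comm (d (n - 1))]

end LastFacility

end FeasSched

/-!
STATEMENT 11: MS-DWSF on a path with the facility at node `a = n`.  With
`W_D = d({n-1,n}) · ∑ G, w(G)` and the MS-BPWRT instance on the same groups with
capacity `C` and ready times `τ(G) = d(orig G, n-1)`, we have `OPT_B ≤ OPT_D − W_D`.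
In particular, from any feasible MS-DWSF schedule `D` under which every group reaches
the facility, setting `B_{T'} = D_{n-1}^{(T')}` yields a feasible MS-BPWRT packing
(every group is dispatched across the last edge exactly once, at a positive time no
earlier than its ready time and respecting the capacity) whose objective value equals
the MS-DWSF objective value minus `W_D`. -/
theorem stmt11 (n C m : ℕ) (orig S w : Fin m → ℕ) (d : ℕ → ℕ)
    (hn : 2 ≤ n) (hC : 1 ≤ C)
    (horig : ∀ g, 1 ≤ orig g ∧ orig g < n)
    (hS : ∀ g, 1 ≤ S g) (hw : ∀ g, 1 ≤ w g) (hSC : ∀ g, S g ≤ C)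
    (hd : ∀ e, 1 ≤ e → e < n → 1 ≤ d e)
    (D : ℕ → ℕ → Finset (Fin m))
    (hfeas : FeasSched n n C orig S d D)
    (harr : ∀ g, ∃ t, g ∈ stateAt n n orig d D n t) :
    ((∀ g, ∃ T', g ∈ D (n - 1) T') ∧
      (∀ g, 1 ≤ binOf n D g ∧ distTo d (orig g) (n - 1) ≤ binOf n D g) ∧
      (∀ j, ∑ g ∈ Finset.univ.filter (fun g => binOf n D g = j), S g ≤ C) ∧
      (∑ g, w g * binOf n D g) + d (n - 1) * (∑ g, w g) =
        ∑ g, w g * arrival n n orig d D g) ∧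
    (((sInf {v : ℕ | ∃ t : Fin m → ℕ, (∀ g, 1 ≤ t g) ∧
          (∀ g, distTo d (orig g) (n - 1) ≤ t g) ∧
          (∀ j, ∑ g ∈ Finset.univ.filter (fun g => t g = j), S g ≤ C) ∧
          v = ∑ g, w g * t g} : ℕ) : ℤ) ≤
        ((sInf {v : ℕ | ∃ D' : ℕ → ℕ → Finset (Fin m), FeasSched n n C orig S d D' ∧
          (∀ g, ∃ t, g ∈ stateAt n n orig d D' n t) ∧
          v = ∑ g, w g * arrival n n orig d D' g} : ℕ) : ℤ) -
          ((d (n - 1) * (∑ g, w g) : ℕ) : ℤ)) := by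
  have hlt : ∀ g, orig g < n := fun g => (horig g).2
  have hne : ∀ g, orig g ≠ n := fun g => (hlt g).ne
  have hpack := hfeas.isPacking_binOf hlt harr
  refine ⟨⟨fun g => hfeas.exists_mem_dispatch_last (hne g) (harr g),
    fun g => ⟨hpack.one_le g, hpack.ready_le g⟩, hpack.load_le,
    hfeas.sum_mul_binOf_add hne harr w⟩, ?_⟩
  rw [le_sub_iff_add_le, ← Nat.cast_add, Nat.cast_le]
  refine le_csInf ⟨_, D, hfeas, harr, rfl⟩ ?_
  rintro _ ⟨D', hfeas', harr', rfl⟩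
  have hpack' := hfeas'.isPacking_binOf hlt harr'
  rw [← hfeas'.sum_mul_binOf_add hne harr' w]
  gcongr
  exact Nat.sInf_le ⟨binOf n D', hpack'.one_le, hpack'.ready_le, hpack'.load_le, rfl⟩
end

section
/- Let s_1,…,s_m ∈ ℤ₊ and C ∈ ℤ₊ with ∑_{i=1}^{m} s_i = 2C. Consider packings t : {1,…,m} → ℤ₊ satisfying ∑_{i : t_i = j} s_i ≤ C for every j ∈ ℤ₊, with objective value ∑_{i=1}^{m} s_i·t_i. Then: (a) every such packing has objective value at least 3C; and (b) the minimum objective value over all such packings equals 3C if and only if there exists a subset S ⊆ {1,…,m} with ∑_{i∈S} s_i = C. -/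
/-!
Every item is counted at least twice in the cost plus the load of bin 1: items of bin 1 once in each
term, all others at least twice in the cost. So the cost plus the load of bin 1 is at least `4C`,
and as that load is at most `C`, the cost is at least `3C`, with equality forcing bin 1 to be full.
Conversely, a subset of total size `C` and its complement fill bins 1 and 2 at cost `C + 2C`.
-/

section Definitions

variable {ι M : Type*} [Fintype ι] [AddCommMonoid M]

/-- The load of bin `j`: the total size of the items that the assignment `t` puts there. -/
def binLoad (s : ι → M) (t : ι → ℕ) (j : ℕ) : M :=
  ∑ i with t i = j, s i

/-- The objective of minsum weighted bin packing when the weight of each item is its size: the sum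
of `s i` times the bin index `t i`. The product is the scalar action of `ℕ`, so that sizes may lie
in any additive monoid. -/
def packingCost (s : ι → M) (t : ι → ℕ) : M :=
  ∑ i, t i • s i

/-- The feasible assignments of items of sizes `s` to bins of capacity `C`. Bins are numbered from
1, so bin 0 has to stay empty. -/
def IsPacking_s12 [LE M] (s : ι → M) (C : M) (t : ι → ℕ) : Prop :=
  (∀ i, 1 ≤ t i) ∧ ∀ j, binLoad s t j ≤ C

end Definitions

/-- The assignment witnessing that a balanced partition yields an optimal packing: items of `I` go
to bin 1, all others to bin 2. -/
def twoBinAssignment {ι : Type*} [DecidableEq ι] (I : Finset ι) : ι → ℕ :=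
  I.piecewise 1 2

theorem packingCost_twoBinAssignment {ι M : Type*} [Fintype ι] [DecidableEq ι] [AddCommMonoid M]
    (s : ι → M) (I : Finset ι) :
    packingCost s (twoBinAssignment I) = ∑ i ∈ I, s i + 2 • ∑ i ∈ Iᶜ, s i := by
  rw [packingCost, ← Finset.sum_add_sum_compl I, Finset.smul_sum]
  congr 1 <;> refine Finset.sum_congr rfl fun i hi => ?_
  · simp [twoBinAssignment, hi]
  · simp [twoBinAssignment, Finset.mem_compl.mp hi]

section OrderedAddMonoid

variable {ι M : Type*} [AddCommMonoid M] [PartialOrder M] [IsOrderedAddMonoid M]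

theorem two_nsmul_le_nsmul_add_ite {a : M} {n : ℕ} (ha : 0 ≤ a) (hn : 1 ≤ n) :
    2 • a ≤ n • a + if n = 1 then a else 0 := by
  split_ifs with h
  · rw [h, one_nsmul, two_nsmul]
  · rw [add_zero]
    exact nsmul_le_nsmul_left ha (by omega)

variable [Fintype ι] {s : ι → M} {t : ι → ℕ}

theorem two_nsmul_sum_le_packingCost_add_binLoad_one (hs : ∀ i, 0 ≤ s i) (ht : ∀ i, 1 ≤ t i) :
    2 • ∑ i, s i ≤ packingCost s t + binLoad s t 1 := by
  rw [packingCost, binLoad, Finset.sum_filter, ← Finset.sum_add_distrib, Finset.smul_sum]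
  exact Finset.sum_le_sum fun i _ => two_nsmul_le_nsmul_add_ite (hs i) (ht i)

-- The left side is `4C` in the form from which the capacity bound on bin 1 cancels a summand.
theorem three_nsmul_add_le_packingCost_add_binLoad_one {C : M} (hs : ∀ i, 0 ≤ s i)
    (ht : ∀ i, 1 ≤ t i) (hsum : ∑ i, s i = 2 • C) :
    3 • C + C ≤ packingCost s t + binLoad s t 1 :=
  calc
    3 • C + C = 2 • ∑ i, s i := by rw [hsum, ← succ_nsmul, ← mul_nsmul]
    _ ≤ packingCost s t + binLoad s t 1 := two_nsmul_sum_le_packingCost_add_binLoad_one hs ht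

theorem binLoad_le_sum {I : Finset ι} {j : ℕ} (hs : ∀ i, 0 ≤ s i) (hI : ∀ i, t i = j → i ∈ I) :
    binLoad s t j ≤ ∑ i ∈ I, s i :=
  Finset.sum_le_sum_of_subset_of_nonneg
    (fun i hi => hI i (Finset.mem_filter.mp hi).2) fun i _ _ => hs i

theorem isPacking_twoBinAssignment [DecidableEq ι] {C : M} {I : Finset ι} (hs : ∀ i, 0 ≤ s i)
    (hI : ∑ i ∈ I, s i ≤ C) (hIc : ∑ i ∈ Iᶜ, s i ≤ C) :
    IsPacking_s12 s C (twoBinAssignment I) := by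
  refine ⟨fun i => ?_, fun j => ?_⟩
  · by_cases hi : i ∈ I <;> simp [twoBinAssignment, hi]
  · by_cases hj : j = 1
    · refine (binLoad_le_sum hs fun i hi => ?_).trans hI
      by_contra hiI
      simp [twoBinAssignment, hiI, hj] at hi
    · refine (binLoad_le_sum hs fun i hi => Finset.mem_compl.mpr fun hiI => hj ?_).trans hIc
      simpa [twoBinAssignment, hiI] using hi.symm

end OrderedAddMonoid

section OrderedCancelAddMonoid

variable {ι M : Type*} [Fintype ι] [AddCommMonoid M] [PartialOrder M] [IsOrderedCancelAddMonoid M]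
  {s : ι → M} {C : M} {t : ι → ℕ}

theorem IsPacking_s12.three_nsmul_le_packingCost (h : IsPacking_s12 s C t) (hs : ∀ i, 0 ≤ s i)
    (hsum : ∑ i, s i = 2 • C) : 3 • C ≤ packingCost s t :=
  le_of_add_le_add_right <|
    calc
      3 • C + C ≤ packingCost s t + binLoad s t 1 :=
        three_nsmul_add_le_packingCost_add_binLoad_one hs h.1 hsum
      _ ≤ packingCost s t + C := by gcongr; exact h.2 1

theorem IsPacking_s12.binLoad_one_eq_capacity (h : IsPacking_s12 s C t) (hs : ∀ i, 0 ≤ s i)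
    (hsum : ∑ i, s i = 2 • C) (hcost : packingCost s t = 3 • C) : binLoad s t 1 = C := by
  have hload : 3 • C + C ≤ 3 • C + binLoad s t 1 :=
    hcost ▸ three_nsmul_add_le_packingCost_add_binLoad_one hs h.1 hsum
  exact (h.2 1).antisymm (le_of_add_le_add_left hload)

theorem exists_isPacking_packingCost_eq_three_nsmul {I : Finset ι} (hs : ∀ i, 0 ≤ s i)
    (hsum : ∑ i, s i = 2 • C) (hI : ∑ i ∈ I, s i = C) :
    ∃ t, IsPacking_s12 s C t ∧ packingCost s t = 3 • C := by
  classical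
  have hIc : ∑ i ∈ Iᶜ, s i = C := by
    refine add_left_cancel (a := C) ?_
    rw [← two_nsmul, ← hsum, ← Finset.sum_add_sum_compl I, hI]
  refine ⟨twoBinAssignment I, isPacking_twoBinAssignment hs hI.le hIc.le, ?_⟩
  rw [packingCost_twoBinAssignment, hI, hIc, ← succ_nsmul']

theorem stmt12_general (hs : ∀ i, 0 ≤ s i) (hsum : ∑ i, s i = 2 • C) :
    (∀ t, IsPacking_s12 s C t → 3 • C ≤ packingCost s t) ∧
      ((∃ t, IsPacking_s12 s C t ∧ packingCost s t = 3 • C) ↔ ∃ I : Finset ι, ∑ i ∈ I, s i = C) :=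
  ⟨fun _ h => h.three_nsmul_le_packingCost hs hsum,
    fun ⟨_, h, hcost⟩ => ⟨_, h.binLoad_one_eq_capacity hs hsum hcost⟩,
    fun ⟨_, hI⟩ => exists_isPacking_packingCost_eq_three_nsmul hs hsum hI⟩

end OrderedCancelAddMonoid

/-!
STATEMENT 12: Let `s_1,…,s_m ∈ ℤ₊` and `C ∈ ℤ₊` with `∑ i, s i = 2C`.  Consider
packings `t : {1,…,m} → ℤ₊` with `∑_{i : t i = j} s i ≤ C` for every bin `j`, and
objective value `∑ i, s i · t i`.  Then:
(a) every such packing has objective value at least `3C`; and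
(b) the minimum objective value over all such packings equals `3C` — equivalently,
given (a), some packing attains objective value `3C` — if and only if there is a
subset `S ⊆ {1,…,m}` with `∑_{i ∈ S} s i = C`.
-/
theorem stmt12 (m C : ℕ) (hm : 1 ≤ m) (hC : 1 ≤ C) (s : Fin m → ℕ)
    (hs : ∀ i, 1 ≤ s i) (hsum : ∑ i, s i = 2 * C) :
    (∀ t : Fin m → ℕ, (∀ i, 1 ≤ t i) →
        (∀ j, ∑ i ∈ Finset.univ.filter (fun i => t i = j), s i ≤ C) →
        3 * C ≤ ∑ i, s i * t i) ∧
    ((∃ t : Fin m → ℕ, (∀ i, 1 ≤ t i) ∧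
        (∀ j, ∑ i ∈ Finset.univ.filter (fun i => t i = j), s i ≤ C) ∧
        ∑ i, s i * t i = 3 * C) ↔
      ∃ I : Finset (Fin m), ∑ i ∈ I, s i = C) := by
  simpa only [IsPacking_s12, binLoad, packingCost, smul_eq_mul, mul_comm, and_imp, and_assoc] using
    stmt12_general (fun i => Nat.zero_le (s i)) hsum
end
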